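/- Let m be an odd squarefree positive integer and let A ⊆ (Z/mZ)* be a subset with |A| > (5/8)·φ(m). Then A + A + A = Z/mZ, i.e., every element of Z/mZ can be written as a₁ + a₂ + a₃ with a₁, a₂, a₃ ∈ A. -/

import Mathlib

set_option linter.unusedVariables false
theorem case1 (p x s t : ℝ) (hp : p ≤ 1) (hx : 0 ≤ x) (hxp : x ≤ p) (hs : 0 ≤ s) (hs2 : s ≤ 2)
   (ht : 0 ≤ t) (ht1 : 4*t ≤ s^2) (ht2 : s - 1 ≤ t) (h1 : p*(s-5/8) ≤ 5/8*s - t) (h2 : x*s+t ≤ 5/8*s) :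
   p*(3/4+s) + x*(5*s-3) + 5*t - 11/4*s - 3/2 ≤ 0 := by
  nlinarith [mul_nonneg (sub_nonneg.2 hp) hs, mul_nonneg (sub_nonneg.2 hp) (sub_nonneg.2 hs2), mul_nonneg (sub_nonneg.2 hxp) hs, mul_nonneg hx hs, mul_nonneg (sub_nonneg.2 hp) hx, sq_nonneg (s-1), sq_nonneg (p-1)]

theorem case2 (p x y z : ℝ) (hp : p ≤ 1) (hx : 0 ≤ x) (hxp : x ≤ p) (hy : 0 ≤ y) (hy2 : y ≤ 1) (hz : 0 ≤ z) (hz2 : z ≤ 1)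
   (h1 : p*(y+z-5/8) ≤ 5/8*(y+z) - y*z) (h2 : x*(y+z)+y*z ≤ 5/8*(y+z))  (h3 : x*(y+z)+y*z ≤ 5/8*(x+z)):
   (p+x)*(3/4+y+z) - 3/2 - (y+z)/4 + y*z - 5/4*(x+y)+2*(x*y+x*z+y*z-5/8*(x+y+z)) ≤ 0 := by
  nlinarith [mul_nonneg (sub_nonneg.2 hp) hy, mul_nonneg (sub_nonneg.2 hp) hz, mul_nonneg (sub_nonneg.2 hp) (sub_nonneg.2 hz2),mul_nonneg (sub_nonneg.2 hz2) hx,mul_nonneg (sub_nonneg.2 hz2) hy, sq_nonneg (x-y)]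

noncomputable def gg (x y z : ℝ) : ℝ := x*y + y*z + z*x - 5/8*(x+y+z)

theorem gg_rot (x y z : ℝ) : gg x y z = gg y z x := by unfold gg; ring
theorem gg_swap (x y z : ℝ) : gg x y z = gg y x z := by unfold gg; ring
theorem gg_swap2 (x y z : ℝ) : gg x y z = gg x z y := by unfold gg; ring

theorem gg_pair {x y z : ℝ} (hx : 0 ≤ x) (hy : 0 ≤ y) (hz : 0 ≤ z) (h : 0 < gg x y z) : 5/8 < y + z := by
  unfold gg at h
  by_contra hc
  push Not at hc
  nlinarith [mul_nonneg hx (sub_nonneg.2 hc), mul_nonneg hy hz, sq_nonneg (y-z), mul_nonneg (add_nonneg hy hz) (sub_nonneg.2 hc)]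

theorem gg_mono1 {x y z x' : ℝ} (hx : 0 ≤ x) (hy : 0 ≤ y) (hz : 0 ≤ z) (h : 0 < gg x y z) (hx' : x ≤ x') :
    gg x y z ≤ gg x' y z := by
  have := gg_pair hx hy hz h
  unfold gg
  nlinarith [mul_nonneg (sub_nonneg.2 hx') (sub_nonneg.2 this.le)]

theorem gg_mono {x y z x' y' z' : ℝ} (hx : 0 ≤ x) (hy : 0 ≤ y) (hz : 0 ≤ z) (h : 0 < gg x y z)
    (hx' : x ≤ x') (hy' : y ≤ y') (hz' : z ≤ z') :
    gg x y z ≤ gg x' y' z' := by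
  have h1 := gg_mono1 hx hy hz h hx'
  have h2 : gg x' y z ≤ gg x' y' z := by
    rw [gg_swap x' y z, gg_swap x' y' z]
    exact gg_mono1 hy (hx.trans hx') hz (by rw [gg_swap]; linarith) hy'
  have h3 : gg x' y' z ≤ gg x' y' z' := by
    rw [← gg_rot z, ← gg_rot z']
    exact gg_mono1 hz (hx.trans hx') (hy.trans hy') (by rw [gg_rot]; linarith) hz'
  linarith

theorem cs_ineq (a b c x y z : ℝ) (hP : 0 < a*b+b*c+c*a) :
    (a*b+b*c+c*a)*(x*y+y*z+z*x) ≤ ((a*(y+z)+b*(z+x)+c*(x+y))/2)^2 := by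
  have hs : 0 < (a+b+c)^2 := by nlinarith [sq_nonneg (a-b), sq_nonneg (b-c), sq_nonneg (c-a), sq_nonneg a, sq_nonneg b, sq_nonneg c]
  set S := a+b+c with hS
  set T := x+y+z with hT
  -- w = S q - T P has zero sum
  have hw : (S*x-T*a)*(S*y-T*b)+(S*y-T*b)*(S*z-T*c)+(S*z-T*c)*(S*x-T*a) ≤ 0 := by
    have h0 : (S*x-T*a)+(S*y-T*b)+(S*z-T*c) = 0 := by rw [hS, hT]; ring
    nlinarith [sq_nonneg ((S*x-T*a)), sq_nonneg (S*y-T*b), sq_nonneg (S*z-T*c), congrArg (fun r => r^2) h0]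
  set Q := a*b+b*c+c*a
  set R := x*y+y*z+z*x
  set B := (a*(y+z)+b*(z+x)+c*(x+y))/2 with hB
  have hw' : S^2*R - 2*S*T*B + T^2*Q ≤ 0 := by
    have : (S*x-T*a)*(S*y-T*b)+(S*y-T*b)*(S*z-T*c)+(S*z-T*c)*(S*x-T*a) = S^2*R - 2*S*T*B + T^2*Q := by
      simp only [B, R, Q]; ring
    linarith
  have : 0 ≤ S^2*(B^2 - Q*R) := by
    nlinarith [sq_nonneg (T*Q-S*B), mul_nonneg hP.le (sub_nonneg.2 hw')]
  have := nonneg_of_mul_nonneg_right this hs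
  linarith

theorem bpos (a b c x y z : ℝ) (hP : 0 < a*b+b*c+c*a) (hq : 0 < x*y+y*z+z*x) (h1 : 0 < a+b+c) (h2 : 0 < x+y+z) :
    0 ≤ (a*(y+z)+b*(z+x)+c*(x+y))/2 := by
  by_contra hc
  push Not at hc
  have e : (a*x+b*y+c*z)^2 ≤ (a^2+b^2+c^2)*(x^2+y^2+z^2) := by
    nlinarith [sq_nonneg (a*y-b*x), sq_nonneg (b*z-c*y), sq_nonneg (c*x-a*z)]
  have e1 : (a^2+b^2+c^2) ≤ (a+b+c)^2 := by nlinarith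
  have e2 : (x^2+y^2+z^2) ≤ (x+y+z)^2 := by nlinarith
  have e3 : (a*x+b*y+c*z)^2 ≤ ((a+b+c)*(x+y+z))^2 := by
    rw [mul_pow]; refine e.trans (mul_le_mul e1 e2 (by positivity) (by positivity))
  have e4 := abs_le_of_sq_le_sq' e3 (by positivity)
  nlinarith

theorem cs_core (a b c x y z : ℝ) (ha : a ≤ 11/5) (hb : b ≤ 11/5) (hc : c ≤ 11/5)
    (ha' : -1 ≤ a) (hb' : -1 ≤ b) (hc' : -1 ≤ c) (h1 : 0 < a + b + c) (h2 : 0 < x + y + z)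
    (hq : x*y+y*z+z*x ≤ 3) (r1 : a*(y+z)+y*z ≤ 3) (r2 : b*(z+x)+z*x ≤ 3) (r3 : c*(x+y)+x*y ≤ 3) :
    (a*b+b*c+c*a) + 6*(x*y+y*z+z*x) ≤ 21 := by
  by_cases ht : x*y+y*z+z*x ≤ 27/25
  · nlinarith
  push Not at ht
  by_cases hP : a*b+b*c+c*a ≤ 0
  · linarith
  push Not at hP
  have hB := bpos a b c x y z hP (by linarith) h1 h2
  have hcs := cs_ineq a b c x y z hP
  set Q := a*b+b*c+c*a
  set t := x*y+y*z+z*x with htd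
  have hBt : 2*((a*(y+z)+b*(z+x)+c*(x+y))/2) + t ≤ 9 := by rw [htd]; linarith
  set B := (a*(y+z)+b*(z+x)+c*(x+y))/2
  have h4 : 4*(Q*t) ≤ (9-t)^2 := by nlinarith
  have h5 : 4*t*(Q+6*t-21) ≤ 0 := by nlinarith
  by_contra hcon
  push Not at hcon
  nlinarith

theorem cs_gg (a b c x y z : ℝ) (ha : a ≤ 1) (hb : b ≤ 1) (hc : c ≤ 1)
    (ha' : 0 ≤ a) (hb' : 0 ≤ b) (hc' : 0 ≤ c) (h1 : 15/16 < a + b + c) (h2 : 15/16 < x + y + z)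
    (hq : gg x y z ≤ 0) (r1 : gg a y z ≤ 0) (r2 : gg x b z ≤ 0) (r3 : gg x y c ≤ 0) :
    gg a b c + 6 * gg x y z ≤ 0 := by
  unfold gg at *
  have := cs_core (16/5*a-1) (16/5*b-1) (16/5*c-1) (16/5*x-1) (16/5*y-1) (16/5*z-1)
    (by linarith) (by linarith) (by linarith) (by linarith) (by linarith) (by linarith) (by linarith) (by linarith)
    (by nlinarith) (by nlinarith) (by nlinarith) (by nlinarith)
  nlinarith

theorem sum4 (a b c x y z : ℝ) : gg a b c + gg a y z + gg x b z + gg x y c = 4 * gg ((a+x)/2) ((b+y)/2) ((c+z)/2) := by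
  unfold gg; ring

/-- exactly index 1 bad -/
theorem bad1 (a b c x y z : ℝ) (ha : a ≤ 1) (hb : b ≤ 1) (hc : c ≤ 1)
    (hx : 0 ≤ x) (hy : 0 ≤ y) (hz : 0 ≤ z) (hxa : x ≤ a) (hyb : y ≤ b) (hzc : z ≤ c)
    (hm : 0 < gg ((a+x)/2) ((b+y)/2) ((c+z)/2))
    (r1 : gg a y z ≤ 0) (b1 : gg x y z ≤ -5/8*x) :
    4 * gg ((a+x)/2) ((b+y)/2) ((c+z)/2) + 2*(-5/8*x) + 2 * gg x y z + 2 * gg x y z ≤ 0 := by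
  have h := gg_mono (by linarith) (by linarith) (by linarith) hm (le_refl ((a+x)/2)) (show (b+y)/2 ≤ (1+y)/2 by linarith)
    (show (c+z)/2 ≤ (1+z)/2 by linarith)
  have := case1 a x (y+z) (y*z) ha hx hxa (by linarith) (by linarith) (by positivity) (by nlinarith [sq_nonneg (y-z)])
    (by nlinarith) (by unfold gg at r1; linarith) (by unfold gg at b1; linarith)
  have e : 4 * gg ((a+x)/2) ((1+y)/2) ((1+z)/2) + 2*(-5/8*x) + 2 * gg x y z + 2 * gg x y z = a*(3/4+(y+z)) + x*(5*(y+z)-3) + 5*(y*z) - 11/4*(y+z) - 3/2 := by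
    unfold gg; ring
  linarith

theorem bad2 (a b c x y z : ℝ) (ha : a ≤ 1) (hb : b ≤ 1) (hc : c ≤ 1)
    (hx : 0 ≤ x) (hy : 0 ≤ y) (hz : 0 ≤ z) (hxa : x ≤ a) (hyb : y ≤ b) (hzc : z ≤ c)
    (hm : 0 < gg ((a+x)/2) ((b+y)/2) ((c+z)/2))
    (r1 : gg a y z ≤ 0) (b1 : gg x y z ≤ -5/8*x) (b2 : gg x y z ≤ -5/8*y) :
    4 * gg ((a+x)/2) ((b+y)/2) ((c+z)/2) + 2*(-5/8*x) + 2 * (-5/8*y) + 2 * gg x y z ≤ 0 := by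
  have h := gg_mono (by linarith) (by linarith) (by linarith) hm (le_refl ((a+x)/2)) (show (b+y)/2 ≤ (1+y)/2 by linarith)
    (show (c+z)/2 ≤ (1+z)/2 by linarith)
  have := case2 a x y z ha hx hxa hy (by linarith) hz (by linarith) 
    (by unfold gg at r1; linarith) (by unfold gg at b1; linarith) (by unfold gg at b2; linarith)
  have e : 4 * gg ((a+x)/2) ((1+y)/2) ((1+z)/2) + 2*(-5/8*x) + 2 * (-5/8*y) + 2 * gg x y z = (a+x)*(3/4+y+z) - 3/2 - (y+z)/4 + y*z - 5/4*(x+y)+2*(x*y+x*z+y*z-5/8*(x+y+z)) := by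
    unfold gg; ring
  linarith

theorem bad3 (a b c x y z : ℝ) (ha : a ≤ 1) (hb : b ≤ 1) (hc : c ≤ 1)
    (hx : 0 ≤ x) (hy : 0 ≤ y) (hz : 0 ≤ z) (hxa : x ≤ a) (hyb : y ≤ b) (hzc : z ≤ c)
    (hm : 0 < gg ((a+x)/2) ((b+y)/2) ((c+z)/2))
    (b1 : gg x y z ≤ -5/8*x) (b2 : gg x y z ≤ -5/8*y) (b3 : gg x y z ≤ -5/8*z) :
    4 * gg ((a+x)/2) ((b+y)/2) ((c+z)/2) + 2*(-5/8*x) + 2 * (-5/8*y) + 2 * (-5/8*z) ≤ 0 := by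
  have h := gg_mono (by linarith) (by linarith) (by linarith) hm (show (a+x)/2 ≤ (1+x)/2 by linarith) (show (b+y)/2 ≤ (1+y)/2 by linarith)
    (show (c+z)/2 ≤ (1+z)/2 by linarith)
  unfold gg at *
  linarith

theorem nobad_sum (x y z : ℝ) 
    (hx : 0 ≤ x) (hy : 0 ≤ y) (hz : 0 ≤ z) (b1 : -5/8*x < gg x y z) (b2 : -5/8*y < gg x y z) (b3 : -5/8*z < gg x y z) :
    15/16 < x + y + z := by
  unfold gg at *
  by_contra h
  nlinarith [mul_nonneg hx hy, mul_nonneg hy hz, mul_nonneg hx hz, sq_nonneg (x-y), sq_nonneg (y-z), sq_nonneg (x-z), sq_nonneg (x+y+z)]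

theorem core (a b c x y z : ℝ) (ha : a ≤ 1) (hb : b ≤ 1) (hc : c ≤ 1)
    (hx : 0 ≤ x) (hy : 0 ≤ y) (hz : 0 ≤ z) (hxa : x ≤ a) (hyb : y ≤ b) (hzc : z ≤ c)
    (r1 : gg a y z ≤ 0) (r2 : gg x b z ≤ 0) (r3 : gg x y c ≤ 0) :
    gg a b c + gg a y z + gg x b z + gg x y c + 2 * max (gg x y z) (-5/8*x) + 2 * max (gg x y z) (-5/8*y)
      + 2 * max (gg x y z) (-5/8*z) ≤ 0 := by
  have hq : gg x y z ≤ 0 := by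
    by_contra h
    push Not at h
    have := gg_mono hx hy hz h hxa le_rfl le_rfl
    linarith
  by_cases hm : gg ((a+x)/2) ((b+y)/2) ((c+z)/2) ≤ 0
  · have h1 := max_le hq (show -5/8*x ≤ 0 by linarith)
    have h2 := max_le hq (show -5/8*y ≤ 0 by linarith)
    have h3 := max_le hq (show -5/8*z ≤ 0 by linarith)
    have := sum4 a b c x y z
    linarith
  push Not at hm
  have s4 := sum4 a b c x y z
  rcases le_or_gt (gg x y z) (-5/8*x) with b1 | b1 <;> rcases le_or_gt (gg x y z) (-5/8*y) with b2 | b2 <;>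
    rcases le_or_gt (gg x y z) (-5/8*z) with b3 | b3
  · rw [max_eq_right b1, max_eq_right b2, max_eq_right b3]
    linarith [bad3 a b c x y z ha hb hc hx hy hz hxa hyb hzc hm b1 b2 b3]
  · rw [max_eq_right b1, max_eq_right b2, max_eq_left b3.le]
    linarith [bad2 a b c x y z ha hb hc hx hy hz hxa hyb hzc hm r1 b1 b2]
  · rw [max_eq_right b1, max_eq_left b2.le, max_eq_right b3]
    rw [gg_swap2 x y z] at b1 b3
    have := bad2 a c b x z y ha hc hb hx hz hy hxa hzc hyb (by rw [gg_swap2]; exact hm) (by rw [gg_swap2]; exact r1) b1 b3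
    rw [gg_swap2 ((a+x)/2), gg_swap2 x z] at this
    linarith
  · rw [max_eq_right b1, max_eq_left b2.le, max_eq_left b3.le]
    linarith [bad1 a b c x y z ha hb hc hx hy hz hxa hyb hzc hm r1 b1]
  · rw [max_eq_left b1.le, max_eq_right b2, max_eq_right b3]
    rw [gg_rot x y z] at b2 b3
    have := bad2 b c a y z x hb hc ha hy hz hx hyb hzc hxa (by rw [← gg_rot]; exact hm) (by rw [← gg_rot, gg_swap, gg_swap] ; exact (by rw [gg_rot x b z, gg_rot] at r2; rw [gg_rot]; convert r2 using 1; unfold gg; ring)) b2 b3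
    rw [← gg_rot ((a+x)/2), ← gg_rot x y] at this
    linarith
  · rw [max_eq_left b1.le, max_eq_right b2, max_eq_left b3.le]
    rw [gg_swap x y z] at b2
    have := bad1 b a c y x z hb ha hc hy hx hz hyb hxa hzc (by rw [gg_swap]; exact hm) (by rw [gg_swap]; exact r2) b2
    rw [gg_swap ((b+y)/2), gg_swap y x] at this
    linarith
  · rw [max_eq_left b1.le, max_eq_left b2.le, max_eq_right b3]
    rw [← gg_rot z x y] at b3
    have := bad1 c a b z x y hc ha hb hz hx hy hzc hxa hyb (by rw [gg_rot]; exact hm) (by rw [gg_rot]; exact r3) b3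
    rw [gg_rot ((c+z)/2), gg_rot z x] at this
    linarith
  · rw [max_eq_left b1.le, max_eq_left b2.le, max_eq_left b3.le]
    have hs := nobad_sum x y z hx hy hz b1 b2 b3
    have := cs_gg a b c x y z ha hb hc (by linarith) (by linarith) (by linarith) (by linarith) hs hq r1 r2 r3
    linarith

theorem gg_corner (x y z r s : ℝ) (hx : 0 ≤ x) (hr : 0 ≤ r) (hs : 0 ≤ s) (hry : r ≤ y) (hsz : s ≤ z) :
    gg x r s ≤ max (gg x y z) (-5/8*x) := by
  by_cases h : gg x r s ≤ -5/8*x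
  · exact h.trans (le_max_right _ _)
  · push Not at h
    refine le_trans ?_ (le_max_left _ _)
    unfold gg at *
    -- x r + r s + s x - 5/8 (r+s) > 0
    have h1 : 0 ≤ x + r - 5/8 := by
      by_contra hc
      push Not at hc
      nlinarith [mul_nonneg hs (sub_nonneg.2 hc.le), mul_nonneg hr hr, mul_nonneg hr hs, mul_nonneg hr (sub_nonneg.2 hc.le)]
    have h2 : 0 ≤ x + s - 5/8 := by
      by_contra hc
      push Not at hc
      nlinarith [mul_nonneg hr (sub_nonneg.2 hc.le), mul_nonneg hs hs, mul_nonneg hr hs, mul_nonneg hs (sub_nonneg.2 hc.le)]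
    nlinarith [mul_nonneg (sub_nonneg.2 hry) h2, mul_nonneg (sub_nonneg.2 hsz) h1, mul_nonneg (sub_nonneg.2 hry) (sub_nonneg.2 hsz)]

theorem sum_gg_indep {G : Type*} [AddCommGroup G] [Fintype G] (a b c : G → ℝ) :
    ∑ x : G × G, gg (a x.1) (b x.2) (c (-(x.1 + x.2))) =
      (Fintype.card G : ℝ)^2 * gg ((∑ i, a i) / Fintype.card G) ((∑ i, b i) / Fintype.card G) ((∑ i, c i) / Fintype.card G) := by
  have hN : (Fintype.card G : ℝ) ≠ 0 := by
    exact_mod_cast Fintype.card_ne_zero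
  set N := (Fintype.card G : ℝ) with hNd
  have e1 : ∀ i : G, ∑ j, c (-(i + j)) = ∑ k, c k := fun i => by
    rw [← Equiv.sum_comp ((Equiv.addLeft i).trans (Equiv.neg G)) c]; rfl
  have e2 : ∀ j : G, ∑ i, c (-(i + j)) = ∑ k, c k := fun j => by
    rw [← Equiv.sum_comp ((Equiv.addRight j).trans (Equiv.neg G)) c]; rfl
  have s1 : ∑ i, ∑ j, a i * b j = (∑ i, a i) * ∑ j, b j := by rw [Finset.sum_mul_sum]
  have s2 : ∑ i, ∑ j, b j * c (-(i + j)) = (∑ i, b i) * ∑ j, c j := by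
    rw [Finset.sum_comm, Finset.sum_mul]
    exact Finset.sum_congr rfl fun j _ => by rw [← Finset.mul_sum, e2]
  have s3 : ∑ i, ∑ j, c (-(i + j)) * a i = (∑ i, c i) * ∑ j, a j := by
    rw [mul_comm, Finset.sum_mul]
    exact Finset.sum_congr rfl fun i _ => by rw [← Finset.sum_mul, e1, mul_comm]
  have t1 : ∑ i : G, ∑ j : G, a i = N * ∑ i, a i := by
    simp [Finset.sum_const, Finset.mul_sum, hNd]
  have t2 : ∑ i : G, ∑ j : G, b j = N * ∑ i, b i := by
    simp [Finset.sum_const, hNd]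
  have t3 : ∑ i : G, ∑ j : G, c (-(i+j)) = N * ∑ i, c i := by
    simp only [e1]; simp [hNd]
  rw [Fintype.sum_prod_type]
  simp only [gg, Finset.sum_sub_distrib, Finset.sum_add_distrib, ← Finset.mul_sum]
  simp only [s2, s3, t1, t2, t3]
  rw [← Finset.sum_mul]
  field_simp

theorem six (q1 q2 q3 r1 r2 r3 s1 s2 s3 : ℝ) (hq1 : 0 ≤ q1) (hq2 : 0 ≤ q2) (hq3 : 0 ≤ q3)
    (hr1 : 0 ≤ r1) (hr2 : 0 ≤ r2) (hr3 : 0 ≤ r3) (hs1 : 0 ≤ s1) (hs2 : 0 ≤ s2) (hs3 : 0 ≤ s3)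
    (h1 : r1 ≤ q1) (h2 : r2 ≤ q2) (h3 : r3 ≤ q3) (h4 : s1 ≤ q1) (h5 : s2 ≤ q2) (h6 : s3 ≤ q3) :
    gg q1 r2 s3 + gg q1 s2 r3 + gg r1 q2 s3 + gg s1 q2 r3 + gg r1 s2 q3 + gg s1 r2 q3 ≤
      2 * max (gg q1 q2 q3) (-5/8*q1) + 2 * max (gg q1 q2 q3) (-5/8*q2) + 2 * max (gg q1 q2 q3) (-5/8*q3) := by
  have a1 := gg_corner q1 q2 q3 r2 s3 hq1 hr2 hs3 h2 h6
  have a2 := gg_corner q1 q2 q3 s2 r3 hq1 hs2 hr3 h5 h3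
  have a3 := gg_corner q2 q1 q3 r1 s3 hq2 hr1 hs3 h1 h6
  have a4 := gg_corner q2 q1 q3 s1 r3 hq2 hs1 hr3 h4 h3
  have a5 := gg_corner q3 q1 q2 r1 s2 hq3 hr1 hs2 h1 h5
  have a6 := gg_corner q3 q1 q2 s1 r2 hq3 hs1 hr2 h4 h2
  rw [gg_swap q2, gg_swap q2] at a3 a4
  rw [gg_rot q3, gg_rot q3] at a5 a6
  linarith

theorem seq_lemma (h n : ℕ) (hh : 3 ≤ h) (hn : n = 2 * h) [NeZero n] (a b c : ZMod n → ℝ)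
    (a0 : ∀ i, 0 ≤ a i) (a1 : ∀ i, a i ≤ 1) (b0 : ∀ i, 0 ≤ b i) (b1 : ∀ i, b i ≤ 1) (c0 : ∀ i, 0 ≤ c i) (c1 : ∀ i, c i ≤ 1)
    (am : ∀ i j, i.val ≤ j.val → a j ≤ a i) (bm : ∀ i j, i.val ≤ j.val → b j ≤ b i) (cm : ∀ i j, i.val ≤ j.val → c j ≤ c i)
    (hg : ∀ i j k, n ≤ i.val + j.val + k.val → gg (a i) (b j) (c k) ≤ 0) :
    gg ((∑ i, a i) / n) ((∑ i, b i) / n) ((∑ i, c i) / n) ≤ 0 := by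
  classical
  have key := sum_gg_indep a b c
  rw [ZMod.card] at key
  suffices hs : ∑ x : ZMod n × ZMod n, gg (a x.1) (b x.2) (c (-(x.1 + x.2))) ≤ 0 by
    rw [key] at hs
    have : (0:ℝ) < (n:ℝ)^2 := by have := NeZero.pos n; positivity
    by_contra hc
    push Not at hc
    linarith [mul_pos this hc]
  have hgen : ∀ i j k : ZMod n, i + j + k = 0 → (i, j) ≠ (0, 0) → gg (a i) (b j) (c k) ≤ 0 := by
    intro i j k hsum hne
    apply hg
    have h1 : ((i.val + j.val + k.val : ℕ) : ZMod n) = 0 := by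
      push_cast; simpa [ZMod.natCast_zmod_val] using hsum
    rw [ZMod.natCast_eq_zero_iff] at h1
    apply Nat.le_of_dvd _ h1
    by_contra hz
    have hi : i.val = 0 := by omega
    have hj : j.val = 0 := by omega
    rw [ZMod.val_eq_zero] at hi hj
    exact hne (by rw [hi, hj])
  let H : ZMod n := (h : ℕ)
  let R : ZMod n := ((h + 1 : ℕ))
  let S : ZMod n := ((n - 1 : ℕ))
  have vH : H.val = h := ZMod.val_natCast_of_lt (by omega)
  have vR : R.val = h + 1 := ZMod.val_natCast_of_lt (by omega)
  have vS : S.val = n - 1 := ZMod.val_natCast_of_lt (by omega)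
  have v0 : (0 : ZMod n).val = 0 := ZMod.val_zero
  have d1 : H ≠ 0 := fun e => by rw [e] at vH; omega
  have d2 : R ≠ 0 := fun e => by rw [e] at vR; omega
  have d3 : S ≠ 0 := fun e => by rw [e] at vS; omega
  have d4 : H ≠ R := fun e => by rw [e] at vH; omega
  have d5 : H ≠ S := fun e => by rw [e] at vH; omega
  have d6 : R ≠ S := fun e => by rw [e] at vR; omega
  have sHH : H + H = 0 := by
    have : ((h + h : ℕ) : ZMod n) = 0 := by rw [ZMod.natCast_eq_zero_iff]; exact ⟨1, by omega⟩
    simpa [H] using this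
  have sHRS : H + R + S = 0 := by
    have : ((h + (h+1) + (n-1) : ℕ) : ZMod n) = 0 := by rw [ZMod.natCast_eq_zero_iff]; exact ⟨2, by omega⟩
    simp only [H, R, S]
    rw [← Nat.cast_add, ← Nat.cast_add]; exact this
  let T : Finset (ZMod n × ZMod n) := {(0,0),(0,H),(H,0),(H,H),(H,R),(H,S),(R,H),(R,S),(S,H),(S,R)}
  have hle : ∑ x : ZMod n × ZMod n, gg (a x.1) (b x.2) (c (-(x.1 + x.2))) ≤ ∑ x ∈ T, gg (a x.1) (b x.2) (c (-(x.1 + x.2))) := by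
    rw [← Finset.sum_sdiff (Finset.subset_univ T)]
    have : ∑ x ∈ Finset.univ \ T, gg (a x.1) (b x.2) (c (-(x.1 + x.2))) ≤ 0 := by
      apply Finset.sum_nonpos
      intro x hx
      apply hgen _ _ _ (by ring)
      intro hx0
      have : x = (0,0) := hx0
      rw [this] at hx
      simp [T] at hx
    linarith
  refine hle.trans ?_
  have hT : ∑ x ∈ T, gg (a x.1) (b x.2) (c (-(x.1 + x.2))) =
      gg (a 0) (b 0) (c 0) + gg (a 0) (b H) (c H) + gg (a H) (b 0) (c H) + gg (a H) (b H) (c 0)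
      + (gg (a H) (b R) (c S) + gg (a H) (b S) (c R) + gg (a R) (b H) (c S) + gg (a S) (b H) (c R) + gg (a R) (b S) (c H) + gg (a S) (b R) (c H)) := by
    have z0 : -((0:ZMod n) + 0) = 0 := by ring
    have z1 : -(0 + H) = H := by linear_combination -sHH
    have z2 : -(H + 0) = H := by linear_combination -sHH
    have z3 : -(H + H) = 0 := by linear_combination -sHH
    have z4 : -(H + R) = S := by linear_combination -sHRS
    have z5 : -(H + S) = R := by linear_combination -sHRS
    have z6 : -(R + H) = S := by linear_combination -sHRS
    have z7 : -(R + S) = H := by linear_combination -sHRS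
    have z8 : -(S + H) = R := by linear_combination -sHRS
    have z9 : -(S + R) = H := by linear_combination -sHRS
    simp only [T]
    rw [Finset.sum_insert, Finset.sum_insert, Finset.sum_insert, Finset.sum_insert, Finset.sum_insert, Finset.sum_insert,
      Finset.sum_insert, Finset.sum_insert, Finset.sum_insert, Finset.sum_singleton]
    · simp only [z0, z1, z2, z3, z4, z5, z6, z7, z8, z9]; ring
    all_goals simp [d1, d2, d3, d4, d5, d6, d1.symm, d2.symm, d3.symm, d4.symm, d5.symm, d6.symm]
  rw [hT]
  have ne1 : ((0:ZMod n), H) ≠ (0,0) := by simp [d1]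
  have c1 := core (a 0) (b 0) (c 0) (a H) (b H) (c H) (a1 _) (b1 _) (c1 _) (a0 _) (b0 _) (c0 _)
    (am _ _ (by omega)) (bm _ _ (by omega)) (cm _ _ (by omega))
    (hgen _ _ _ (by linear_combination sHH) (by simp [d1]))
    (hgen _ _ _ (by linear_combination sHH) (by simp [d1]))
    (hgen _ _ _ (by linear_combination sHH) (by simp [d1]))
  have c2 := six (a H) (b H) (c H) (a R) (b R) (c R) (a S) (b S) (c S) (a0 _) (b0 _) (c0 _) (a0 _) (b0 _) (c0 _) (a0 _) (b0 _) (c0 _)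
    (am _ _ (by omega)) (bm _ _ (by omega)) (cm _ _ (by omega)) (am _ _ (by omega)) (bm _ _ (by omega)) (cm _ _ (by omega))
  linarith

theorem exists_sort {α : Type*} [Fintype α] (n : ℕ) [NeZero n] (hn : Fintype.card α = n) (f : α → ℝ) :
    ∃ e : ZMod n ≃ α, ∀ i j : ZMod n, i.val ≤ j.val → f (e j) ≤ f (e i) := by
  let e0 : Fin n ≃ α := (Fintype.equivFinOfCardEq hn).symm
  let v : ZMod n → Fin n := fun i => ⟨i.val, ZMod.val_lt i⟩
  have hv : Function.Bijective v := by
    rw [Fintype.bijective_iff_injective_and_card]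
    refine ⟨fun i j h => ZMod.val_injective n (by simpa [v] using h), by simp [ZMod.card]⟩
  let σ := Tuple.sort (fun i => - f (e0 i))
  have hσ := Tuple.monotone_sort (fun i => - f (e0 i))
  refine ⟨((Equiv.ofBijective v hv).trans σ).trans e0, fun i j hij => ?_⟩
  have := hσ (show v i ≤ v j from hij)
  simp only [Function.comp] at this
  simpa [σ] using this

noncomputable def avg {α : Type*} [Fintype α] (f : α → ℝ) : ℝ := (∑ x, f x) / Fintype.card α

theorem avg_nonneg {α : Type*} [Fintype α] (f : α → ℝ) (h : ∀ x, 0 ≤ f x) : 0 ≤ avg f :=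
  div_nonneg (Finset.sum_nonneg fun x _ => h x) (by positivity)

theorem avg_le_one {α : Type*} [Fintype α] (f : α → ℝ) (h : ∀ x, f x ≤ 1) : avg f ≤ 1 := by
  apply div_le_one_of_le₀ _ (by positivity)
  calc ∑ x, f x ≤ ∑ x : α, (1:ℝ) := Finset.sum_le_sum fun x _ => h x
    _ = _ := by simp

theorem avg_equiv {α β : Type*} [Fintype α] [Fintype β] (e : α ≃ β) (f : β → ℝ) : avg (fun x => f (e x)) = avg f := by
  unfold avg; rw [Equiv.sum_comp e f, Fintype.card_congr e]

theorem avg_prod {α β : Type*} [Fintype α] [Fintype β] (f : α × β → ℝ) :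
    avg f = avg (fun a => avg (fun b => f (a, b))) := by
  unfold avg
  rw [Fintype.sum_prod_type, Fintype.card_prod, ← Finset.sum_div, div_div]
  push_cast; rw [mul_comm]

def Good (R : Type) [CommRing R] : Prop := ∀ _inst : Fintype Rˣ, ∀ f1 f2 f3 : Rˣ → ℝ,
  (∀ u, 0 ≤ f1 u) → (∀ u, f1 u ≤ 1) → (∀ u, 0 ≤ f2 u) → (∀ u, f2 u ≤ 1) → (∀ u, 0 ≤ f3 u) → (∀ u, f3 u ≤ 1) →
  0 < gg (avg f1) (avg f2) (avg f3) →
  ∀ x : R, ∃ u v w : Rˣ, (u : R) + v + w = x ∧ 0 < gg (f1 u) (f2 v) (f3 w)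

def Fine (R : Type) [CommRing R] : Prop := ∀ _inst : Fintype Rˣ, ∀ f1 f2 f3 : Rˣ → ℝ,
  (∀ u, f1 u = 0 ∨ f1 u = 1) → (∀ u, f2 u = 0 ∨ f2 u = 1) → (∀ u, f3 u = 0 ∨ f3 u = 1) →
  0 < gg (avg f1) (avg f2) (avg f3) →
  ∀ x : R, ∃ u v w : Rˣ, (u : R) + v + w = x ∧ f1 u = 1 ∧ f2 v = 1 ∧ f3 w = 1

theorem Good.prod {R S : Type} [CommRing R] [CommRing S] [Finite Rˣ] [Finite Sˣ] (hR : Good R) (hS : Good S) : Good (R × S) := by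
  intro _ f1 f2 f3 a0 a1 b0 b1 c0 c1 h x
  have := Fintype.ofFinite Rˣ
  have := Fintype.ofFinite Sˣ
  let e : Rˣ × Sˣ ≃ (R × S)ˣ := (MulEquiv.prodUnits (M := R) (N := S)).symm.toEquiv
  rw [← avg_equiv e f1, ← avg_equiv e f2, ← avg_equiv e f3, avg_prod, avg_prod, avg_prod] at h
  obtain ⟨u, v, w, hs, hg⟩ := hR _ _ _ _ (fun u => avg_nonneg _ fun _ => a0 _) (fun u => avg_le_one _ fun _ => a1 _)
    (fun u => avg_nonneg _ fun _ => b0 _) (fun u => avg_le_one _ fun _ => b1 _)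
    (fun u => avg_nonneg _ fun _ => c0 _) (fun u => avg_le_one _ fun _ => c1 _) h x.1
  obtain ⟨u', v', w', hs', hg'⟩ := hS _ _ _ _ (fun _ => a0 _) (fun _ => a1 _) (fun _ => b0 _) (fun _ => b1 _)
    (fun _ => c0 _) (fun _ => c1 _) hg x.2
  refine ⟨e (u, u'), e (v, v'), e (w, w'), ?_, hg'⟩
  ext
  · exact hs
  · exact hs'

theorem Fine.prod {R S : Type} [CommRing R] [CommRing S] [Finite Rˣ] [Finite Sˣ] (hR : Good R) (hS : Fine S) : Fine (R × S) := by
  intro _ f1 f2 f3 a0 b0 c0 h x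
  have := Fintype.ofFinite Rˣ
  have := Fintype.ofFinite Sˣ
  let e : Rˣ × Sˣ ≃ (R × S)ˣ := (MulEquiv.prodUnits (M := R) (N := S)).symm.toEquiv
  rw [← avg_equiv e f1, ← avg_equiv e f2, ← avg_equiv e f3, avg_prod, avg_prod, avg_prod] at h
  have pos : ∀ r : ℝ, r = 0 ∨ r = 1 → 0 ≤ r := by rintro r (h | h) <;> rw [h]; norm_num
  have le1 : ∀ r : ℝ, r = 0 ∨ r = 1 → r ≤ 1 := by rintro r (h | h) <;> rw [h]; norm_num
  obtain ⟨u, v, w, hs, hg⟩ := hR _ _ _ _ (fun u => avg_nonneg _ fun _ => pos _ (a0 _)) (fun u => avg_le_one _ fun _ => le1 _ (a0 _))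
    (fun u => avg_nonneg _ fun _ => pos _ (b0 _)) (fun u => avg_le_one _ fun _ => le1 _ (b0 _))
    (fun u => avg_nonneg _ fun _ => pos _ (c0 _)) (fun u => avg_le_one _ fun _ => le1 _ (c0 _)) h x.1
  obtain ⟨u', v', w', hs', hg'⟩ := hS _ _ _ _ (fun _ => a0 _) (fun _ => b0 _) (fun _ => c0 _) hg x.2
  refine ⟨e (u, u'), e (v, v'), e (w, w'), ?_, hg'⟩
  ext
  · exact hs
  · exact hs'

theorem Good.equiv {R S : Type} [CommRing R] [CommRing S] (e : R ≃+* S) (hR : Good R) : Good S := by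
  intro _ f1 f2 f3 a0 a1 b0 b1 c0 c1 h x
  let e' : Rˣ ≃ Sˣ := (Units.mapEquiv e.toMulEquiv).toEquiv
  have : Fintype Rˣ := Fintype.ofEquiv _ e'.symm
  rw [← avg_equiv e' f1, ← avg_equiv e' f2, ← avg_equiv e' f3] at h
  obtain ⟨u, v, w, hs, hg⟩ := hR _ _ _ _ (fun _ => a0 _) (fun _ => a1 _) (fun _ => b0 _) (fun _ => b1 _)
    (fun _ => c0 _) (fun _ => c1 _) h (e.symm x)
  refine ⟨e' u, e' v, e' w, ?_, hg⟩
  change e u + e v + e w = x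
  rw [← map_add, ← map_add, hs, e.apply_symm_apply]

theorem Fine.equiv {R S : Type} [CommRing R] [CommRing S] (e : R ≃+* S) (hR : Fine R) : Fine S := by
  intro _ f1 f2 f3 a0 b0 c0 h x
  let e' : Rˣ ≃ Sˣ := (Units.mapEquiv e.toMulEquiv).toEquiv
  have : Fintype Rˣ := Fintype.ofEquiv _ e'.symm
  rw [← avg_equiv e' f1, ← avg_equiv e' f2, ← avg_equiv e' f3] at h
  obtain ⟨u, v, w, hs, hg⟩ := hR _ _ _ _ (fun _ => a0 _) (fun _ => b0 _) (fun _ => c0 _) h (e.symm x)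
  refine ⟨e' u, e' v, e' w, ?_, hg⟩
  change e u + e v + e w = x
  rw [← map_add, ← map_add, hs, e.apply_symm_apply]

theorem avg_const {α : Type*} [Fintype α] [Nonempty α] (r : ℝ) : avg (fun _ : α => r) = r := by
  unfold avg; simp

theorem Fine.fst {R S : Type} [CommRing R] [CommRing S] [Finite Sˣ] (h : Fine (R × S)) : Fine R := by
  intro _ f1 f2 f3 a0 b0 c0 hg x
  have := Fintype.ofFinite Sˣ
  let e : Rˣ × Sˣ ≃ (R × S)ˣ := (MulEquiv.prodUnits (M := R) (N := S)).symm.toEquiv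
  have : Fintype (R × S)ˣ := Fintype.ofEquiv _ e
  have key : ∀ f : Rˣ → ℝ, avg (fun u : (R × S)ˣ => f (e.symm u).1) = avg f := by
    intro f
    rw [← avg_equiv e, avg_prod]
    simp [avg_const]
  obtain ⟨u, v, w, hs, h1, h2, h3⟩ := h _ (fun u => f1 (e.symm u).1) (fun u => f2 (e.symm u).1) (fun u => f3 (e.symm u).1)
    (fun _ => a0 _) (fun _ => b0 _) (fun _ => c0 _) (by rw [key, key, key]; exact hg) (x, 0)
  exact ⟨_, _, _, congrArg Prod.fst hs, h1, h2, h3⟩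

theorem good_triv (R : Type) [CommRing R] [Subsingleton R] : Good R := by
  intro _ f1 f2 f3 a0 a1 b0 b1 c0 c1 h x
  have key : ∀ f : Rˣ → ℝ, avg f = f 1 := by
    intro f
    have : f = fun _ => f 1 := funext fun u => by rw [Subsingleton.elim u 1]
    rw [this, avg_const]
  rw [key, key, key] at h
  exact ⟨1, 1, 1, Subsingleton.elim _ _, h⟩

open Pointwise in
theorem cd3 {p : ℕ} (hp : p.Prime) (A B C : Finset (ZMod p)) (hA : A.Nonempty) (hB : B.Nonempty) (hC : C.Nonempty)
    (h : p + 2 ≤ A.card + B.card + C.card) (x : ZMod p) : ∃ a ∈ A, ∃ b ∈ B, ∃ c ∈ C, a + b + c = x := by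
  have := Fact.mk hp
  have h1 := ZMod.cauchy_davenport hp hA hB
  have h2 := ZMod.cauchy_davenport hp (hA.add hB) hC
  have hC' := hC.card_pos
  have h3 : p ≤ (A + B + C).card := by omega
  have h4 : A + B + C = Finset.univ := by
    apply Finset.eq_univ_of_card
    rw [ZMod.card]
    apply le_antisymm _ h3
    calc _ ≤ _ := Finset.card_le_univ _
      _ = p := ZMod.card p
  have hx : x ∈ A + B + C := by rw [h4]; simp
  obtain ⟨y, hy, c, hc, rfl⟩ := Finset.mem_add.1 hx
  obtain ⟨a, ha, b, hb, rfl⟩ := Finset.mem_add.1 hy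
  exact ⟨a, ha, b, hb, c, hc, rfl⟩

theorem good_prime {p : ℕ} (hp : p.Prime) (h7 : 7 ≤ p) : Good (ZMod p) := by
  intro _ f1 f2 f3 a0 a1 b0 b1 c0 c1 hg x
  have := Fact.mk hp
  obtain ⟨h, hh⟩ : ∃ h, p - 1 = 2 * h := by
    obtain ⟨k, hk⟩ := hp.odd_of_ne_two (by omega)
    exact ⟨k, by omega⟩
  obtain ⟨n, hn⟩ : ∃ n, n = p - 1 := ⟨_, rfl⟩
  have : NeZero n := ⟨by omega⟩
  have hcard : Fintype.card (ZMod p)ˣ = n := by rw [ZMod.card_units_eq_totient, Nat.totient_prime hp, hn]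
  obtain ⟨e1, he1⟩ := exists_sort n hcard f1
  obtain ⟨e2, he2⟩ := exists_sort n hcard f2
  obtain ⟨e3, he3⟩ := exists_sort n hcard f3
  by_contra hcon
  push Not at hcon
  have havg : ∀ (f : (ZMod p)ˣ → ℝ) (e : ZMod n ≃ (ZMod p)ˣ), (∑ i, f (e i)) / n = avg f := by
    intro f e
    rw [← avg_equiv e]; unfold avg; rw [ZMod.card]
  have key := seq_lemma h n (by omega) (by omega) (fun i => f1 (e1 i)) (fun i => f2 (e2 i)) (fun i => f3 (e3 i))
    (fun _ => a0 _) (fun _ => a1 _) (fun _ => b0 _) (fun _ => b1 _)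
    (fun _ => c0 _) (fun _ => c1 _) he1 he2 he3 ?_
  · rw [havg, havg, havg] at key
    linarith
  intro i j k hijk
  by_contra hpos
  push Not at hpos
  classical
  let T : (ZMod n ≃ (ZMod p)ˣ) → ZMod n → Finset (ZMod p) := fun e i =>
    (Finset.range (i.val + 1)).image (fun t : ℕ => ((e (t : ZMod n) : (ZMod p)ˣ) : ZMod p))
  have hTc : ∀ e i, (T e i).card = i.val + 1 := by
    intro e i
    simp only [T]
    rw [Finset.card_image_of_injOn, Finset.card_range]
    intro s hs t ht hst
    have h1 := e.injective (Units.ext hst)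
    have hi := ZMod.val_lt i
    simp only [Finset.coe_range, Set.mem_Iio] at hs ht
    have := congrArg ZMod.val h1
    rwa [ZMod.val_natCast_of_lt (by omega), ZMod.val_natCast_of_lt (by omega)] at this
  have hTn : ∀ e i, (T e i).Nonempty := fun e i => by rw [← Finset.card_pos, hTc]; omega
  have hTm : ∀ (f : (ZMod p)ˣ → ℝ) (e : ZMod n ≃ (ZMod p)ˣ), (∀ i j : ZMod n, i.val ≤ j.val → f (e j) ≤ f (e i)) →
      ∀ i, ∀ y ∈ T e i, ∃ u : (ZMod p)ˣ, (u : ZMod p) = y ∧ f (e i) ≤ f u := by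
    intro f e he i y hy
    simp only [T, Finset.mem_image, Finset.mem_range] at hy
    obtain ⟨t, ht, rfl⟩ := hy
    have hi := ZMod.val_lt i
    refine ⟨_, rfl, he _ _ ?_⟩
    rw [ZMod.val_natCast_of_lt (by omega)]; omega
  obtain ⟨y1, hy1, y2, hy2, y3, hy3, hs⟩ := cd3 hp (T e1 i) (T e2 j) (T e3 k) (hTn _ _) (hTn _ _) (hTn _ _)
    (by rw [hTc, hTc, hTc]; omega) x
  obtain ⟨u, rfl, hu⟩ := hTm f1 e1 he1 i y1 hy1
  obtain ⟨v, rfl, hv⟩ := hTm f2 e2 he2 j y2 hy2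
  obtain ⟨w, rfl, hw⟩ := hTm f3 e3 he3 k y3 hy3
  have := hcon u v w hs
  have := gg_mono (a0 _) (b0 _) (c0 _) hpos hu hv hw
  linarith

theorem good_of_coprime (m : ℕ) : Squarefree m → Nat.Coprime m 30 → Good (ZMod m) := by
  induction m using induction_on_primes with
  | zero => intro h; simp at h
  | one => intro _ _; exact good_triv (ZMod 1)
  | prime_mul p a hp ih =>
    intro hsf hco
    have hpa : Nat.Coprime p a := Nat.coprime_of_squarefree_mul hsf
    have hp30 : Nat.Coprime p 30 := Nat.Coprime.coprime_mul_right hco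
    have h7 : 7 ≤ p := by
      by_contra hc
      have := hp.two_le
      interval_cases p <;> revert hp30 hp <;> decide
    have ha : a ≠ 0 := by rintro rfl; simp at hsf
    have : NeZero a := ⟨ha⟩
    have : NeZero p := ⟨hp.ne_zero⟩
    exact Good.equiv (ZMod.chineseRemainder hpa).symm
      (Good.prod (good_prime hp h7) (ih (hsf.squarefree_of_dvd (Dvd.intro_left _ rfl)) (Nat.Coprime.coprime_mul_left hco)))

def Full (x y z : ℕ) : Prop := 1 ≤ x ∧ 1 ≤ y ∧ 1 ≤ z ∧ 7 ≤ x + y + z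

instance instDecFull (x y z : ℕ) : Decidable (Full x y z) := by
  unfold Full; infer_instance

def Sz (p1 p2 p3 q1 q2 q3 : ℕ) : Prop :=
    5 * ((p1+q1)+(p2+q2)+(p3+q3)) < (p1+q1)*(p2+q2)+(p2+q2)*(p3+q3)+(p3+q3)*(p1+q1) →
    (Full p1 p2 p3 ∨ Full q1 q2 q3) ∧
    (Full p1 p2 q3 ∨ Full p1 q2 p3 ∨ Full q1 p2 p3) ∧
    (Full q1 q2 p3 ∨ Full q1 p2 q3 ∨ Full p1 q2 q3)

instance instDecSz (p1 p2 p3 q1 q2 q3 : ℕ) : Decidable (Sz p1 p2 p3 q1 q2 q3) := by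
  unfold Sz; infer_instance

theorem size_check : ∀ p1 < 5, ∀ p2 < 5, ∀ p3 < 5, ∀ q1 < 5, ∀ q2 < 5, ∀ q3 < 5,
    Sz p1 p2 p3 q1 q2 q3 := by
  decide +kernel

theorem gg_diag (t : ℝ) (h : 5/8 < t) : 0 < gg t t t := by
  unfold gg; nlinarith

theorem fine35 : Fine (ZMod 3 × ZMod 5) := by
  classical
  intro _ f1 f2 f3 a0 b0 c0 hg x
  let e : (ZMod 3)ˣ × (ZMod 5)ˣ ≃ (ZMod 3 × ZMod 5)ˣ := (MulEquiv.prodUnits (M := ZMod 3) (N := ZMod 5)).symm.toEquiv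
  let P : ((ZMod 3 × ZMod 5)ˣ → ℝ) → (ZMod 3)ˣ → Finset (ZMod 5)ˣ := fun f u => Finset.univ.filter fun v => f (e (u, v)) = 1
  have hc5 : Fintype.card (ZMod 5)ˣ = 4 := by decide
  have hc3 : Fintype.card (ZMod 3)ˣ = 2 := by decide
  have hP : ∀ f u, (P f u).card < 5 := fun f u => by
    have := Finset.card_le_univ (P f u)
    omega
  have havg : ∀ f, (∀ u, f u = 0 ∨ f u = 1) → avg f = (((P f 1).card + (P f (-1)).card : ℕ) : ℝ) / 8 := by
    intro f hf
    have hs : ∀ u, ∑ v, f (e (u, v)) = (P f u).card := by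
      intro u
      simp only [P]
      rw [← Finset.sum_boole]
      refine Finset.sum_congr rfl fun v _ => ?_
      rcases hf (e (u, v)) with h | h <;> simp [h]
    rw [← avg_equiv e]
    unfold avg
    rw [Fintype.sum_prod_type, Fintype.card_prod, hc5, hc3]
    simp only [hs]
    rw [show (Finset.univ : Finset (ZMod 3)ˣ) = {1, -1} by decide, Finset.sum_pair (by decide)]
    push_cast; norm_num
  rw [havg f1 a0, havg f2 b0, havg f3 c0] at hg
  have hineq : 5 * (((P f1 1).card+(P f1 (-1)).card)+((P f2 1).card+(P f2 (-1)).card)+((P f3 1).card+(P f3 (-1)).card)) <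
      ((P f1 1).card+(P f1 (-1)).card)*((P f2 1).card+(P f2 (-1)).card)+((P f2 1).card+(P f2 (-1)).card)*((P f3 1).card+(P f3 (-1)).card)
      +((P f3 1).card+(P f3 (-1)).card)*((P f1 1).card+(P f1 (-1)).card) := by
    generalize (P f1 1).card+(P f1 (-1)).card = s1 at *
    generalize (P f2 1).card+(P f2 (-1)).card = s2 at *
    generalize (P f3 1).card+(P f3 (-1)).card = s3 at *
    unfold gg at hg
    have : (5:ℝ) * (s1 + s2 + s3) < s1*s2+s2*s3+s3*s1 := by linarith
    exact_mod_cast this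
  have hsel : ∀ s1 s2 s3 : (ZMod 3)ˣ, (s1 : ZMod 3) + s2 + s3 = x.1 →
      (1 ≤ (P f1 s1).card ∧ 1 ≤ (P f2 s2).card ∧ 1 ≤ (P f3 s3).card ∧ 7 ≤ (P f1 s1).card + (P f2 s2).card + (P f3 s3).card) →
      ∃ u v w : (ZMod 3 × ZMod 5)ˣ, (u : ZMod 3 × ZMod 5) + v + w = x ∧ f1 u = 1 ∧ f2 v = 1 ∧ f3 w = 1 := by
    intro s1 s2 s3 hsum ⟨h1, h2, h3, h7⟩
    have hci : ∀ S : Finset (ZMod 5)ˣ, (S.image Units.val).card = S.card := fun S =>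
      Finset.card_image_of_injective _ Units.val_injective
    obtain ⟨y1, hy1, y2, hy2, y3, hy3, hs⟩ := cd3 (p := 5) (by norm_num) ((P f1 s1).image Units.val)
      ((P f2 s2).image Units.val) ((P f3 s3).image Units.val)
      ((Finset.card_pos.1 h1).image _) ((Finset.card_pos.1 h2).image _) ((Finset.card_pos.1 h3).image _)
      (by rw [hci, hci, hci]; omega) x.2
    obtain ⟨v1, hv1, rfl⟩ := Finset.mem_image.1 hy1
    obtain ⟨v2, hv2, rfl⟩ := Finset.mem_image.1 hy2
    obtain ⟨v3, hv3, rfl⟩ := Finset.mem_image.1 hy3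
    refine ⟨e (s1, v1), e (s2, v2), e (s3, v3), ?_, (Finset.mem_filter.1 hv1).2, (Finset.mem_filter.1 hv2).2, (Finset.mem_filter.1 hv3).2⟩
    ext
    · exact hsum
    · exact hs
  obtain ⟨k0, k1, k2⟩ := size_check _ (hP f1 1) _ (hP f2 1) _ (hP f3 1) _ (hP f1 (-1)) _ (hP f2 (-1)) _ (hP f3 (-1)) hineq
  have hx3 : ∀ y : ZMod 3, y = 0 ∨ y = 1 ∨ y = 2 := by decide
  rcases hx3 x.1 with h | h | h
  · rcases k0 with k | k <;> exact hsel _ _ _ (by rw [h]; decide) k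
  · rcases k1 with k | k | k <;> exact hsel _ _ _ (by rw [h]; decide) k
  · rcases k2 with k | k | k <;> exact hsel _ _ _ (by rw [h]; decide) k

theorem fine_dvd (d : ℕ) (hd : d ∣ 15) : Fine (ZMod d) := by
  have h3 : Fine (ZMod 3) := Fine.fst fine35
  have h5 : Fine (ZMod 5) := Fine.fst (Fine.equiv RingEquiv.prodComm fine35)
  have h15 : Fine (ZMod 15) := Fine.equiv (ZMod.chineseRemainder (show Nat.Coprime 3 5 by decide)).symm fine35
  have h1 : Fine (ZMod 1) := by
    have : Fine (ZMod 1 × ZMod 3) := Fine.prod (good_triv (ZMod 1)) h3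
    exact Fine.fst this
  have : d ∈ Nat.divisors 15 := by simp [hd]
  have e : Nat.divisors 15 = {1, 3, 5, 15} := by decide
  rw [e] at this
  simp only [Finset.mem_insert, Finset.mem_singleton] at this
  rcases this with rfl | rfl | rfl | rfl <;> assumption

theorem fine_all (m : ℕ) (hodd : Odd m) (hsf : Squarefree m) : Fine (ZMod m) := by
  obtain ⟨k, hk⟩ := Nat.gcd_dvd_left m 15
  have hm : m ≠ 0 := hsf.ne_zero
  have hd : Nat.gcd m 15 ∣ 15 := Nat.gcd_dvd_right m 15
  obtain ⟨d, hdd⟩ : ∃ d, d = Nat.gcd m 15 := ⟨_, rfl⟩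
  rw [← hdd] at hk hd
  have hsf' := hsf
  rw [hk] at hsf'
  have hco : Nat.Coprime d k := Nat.coprime_of_squarefree_mul hsf'
  have hk15 : Nat.Coprime k 15 := by
    have h1 : Nat.gcd k 15 ∣ d := by
      rw [hdd]; exact Nat.gcd_dvd_gcd_of_dvd_left _ (hk ▸ Dvd.intro_left _ rfl)
    have h2 : Nat.gcd k 15 ∣ Nat.gcd d k := Nat.dvd_gcd h1 (Nat.gcd_dvd_left _ _)
    rw [hco] at h2
    exact Nat.dvd_one.1 h2
  have hk2 : Nat.Coprime k 2 := by
    rw [hk, Nat.odd_mul] at hodd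
    exact hodd.2.coprime_two_right
  have hk30 : Nat.Coprime k 30 := by
    have := Nat.Coprime.mul_right hk2 hk15
    simpa using this
  have : NeZero d := ⟨by rintro rfl; simp at hk; exact hm hk⟩
  have : NeZero k := ⟨by rintro rfl; simp at hk; exact hm hk⟩
  have hg := good_of_coprime k (hsf'.squarefree_of_dvd (Dvd.intro_left _ rfl)) hk30
  have hf := Fine.prod hg (fine_dvd d hd)
  rw [hk, mul_comm]
  exact Fine.equiv (ZMod.chineseRemainder hco.symm).symm hf

/-- Corollary: if `m` is an odd squarefree positive integer and `A ⊆ (ℤ/mℤ)*` has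
`|A| > (5/8)φ(m)`, then `A + A + A = ℤ/mℤ`. -/
theorem stmt5 (m : ℕ) [NeZero m] (hodd : Odd m) (hsf : Squarefree m)
    (A : Set (ZMod m)) (hA : ∀ a ∈ A, IsUnit a)
    (hcard : (A.ncard : ℝ) > 5 / 8 * (Nat.totient m : ℝ)) :
    ∀ x : ZMod m, ∃ a₁ ∈ A, ∃ a₂ ∈ A, ∃ a₃ ∈ A, x = a₁ + a₂ + a₃ := by
  classical
  intro x
  let f : (ZMod m)ˣ → ℝ := fun u => if (u : ZMod m) ∈ A then 1 else 0
  have hf : ∀ u, f u = 0 ∨ f u = 1 := by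
    intro u; by_cases h : (u : ZMod m) ∈ A <;> simp [f, h]
  have hf1 : ∀ u, f u = 1 → (u : ZMod m) ∈ A := by
    intro u h; by_contra hn; simp [f, hn] at h
  have hsum : ∑ u, f u = A.ncard := by
    simp only [f]
    rw [Finset.sum_boole]
    have : A = ((Finset.univ.filter fun u : (ZMod m)ˣ => (u : ZMod m) ∈ A).image Units.val : Finset (ZMod m)) := by
      ext a
      simp only [Finset.coe_image, Finset.coe_filter, Finset.mem_univ, true_and, Set.mem_image, Set.mem_ofPred_eq]
      constructor
      · intro ha
        obtain ⟨u, rfl⟩ := hA a ha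
        exact ⟨u, ha, rfl⟩
      · rintro ⟨u, hu, rfl⟩; exact hu
    conv_rhs => rw [this]
    rw [Set.ncard_coe_finset, Finset.card_image_of_injective _ Units.val_injective]
  have hav : 5/8 < avg f := by
    unfold avg
    rw [hsum, ZMod.card_units_eq_totient, lt_div_iff₀]
    · exact hcard
    · exact_mod_cast Nat.totient_pos.2 (NeZero.pos m)
  obtain ⟨u, v, w, hs, h1, h2, h3⟩ := fine_all m hodd hsf _ f f f hf hf hf (gg_diag _ hav) x
  exact ⟨u, hf1 u h1, v, hf1 v h2, w, hf1 w h3, hs.symm⟩
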